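/- Let T be an exponentially growing rank-one transformation with a bounded number of cuts, and let I be the unit interval. Then T is boundedly rationally ergodic on I: there is a constant c such that for every n ≥ 1, the essential supremum of (1/a_n(I)) S_n(1_I) is at most c, where S_n(1_I) = ∑_{k=0}^{n−1} 1_I ∘ T^k. -/

import Mathlib

open MeasureTheory Filter Set Pointwise

/-- A rank-one cutting-and-stacking transformation of a subset `X ⊆ ℝ` (with Lebesgue
measure), given by columns `C n` consisting of `h n` levels (open intervals) of width `w n`,
with `pos n j` the left endpoint of the level of height `j` in column `C n`; column `C (n+1)`
is obtained from `C n` by cutting into `r n ≥ 2` subcolumns of equal width, adding `s n k`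
spacers above the `k`-th subcolumn, and stacking. -/
structure RankOne where
  X : Set ℝ
  T : ℝ ≃ᵐ ℝ
  r : ℕ → ℕ
  s : ℕ → ℕ → ℕ
  h : ℕ → ℕ
  w : ℕ → ℝ
  pos : ℕ → ℕ → ℝ
  hr : ∀ n, 2 ≤ r n
  h0 : h 0 = 1
  w0 : w 0 = 1
  pos0 : pos 0 0 = 0
  hrec : ∀ n, h (n + 1) = ∑ k ∈ Finset.range (r n), (h n + s n k)
  wrec : ∀ n, w (n + 1) = w n / (r n : ℝ)
  hX : X = ⋃ n, ⋃ j < h n, Set.Ioo (pos n j) (pos n j + w n)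
  disj : ∀ n, ∀ j < h n, ∀ j' < h n, j ≠ j' →
    Disjoint (Set.Ioo (pos n j) (pos n j + w n)) (Set.Ioo (pos n j') (pos n j' + w n))
  stack : ∀ n, ∀ j < h n, ∀ k < r n,
    pos (n + 1) ((∑ i ∈ Finset.range k, (h n + s n i)) + j) = pos n j + (k : ℝ) * w (n + 1)
  Tmap : ∀ n j, j + 1 < h n → ∀ x ∈ Set.Ioo (pos n j) (pos n j + w n),
    T x = x + (pos n (j + 1) - pos n j)
  Tbij : Set.BijOn (⇑T) X X
  Tpres : MeasurePreserving (⇑T) (volume.restrict X) (volume.restrict X)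

namespace RankOne

/-- The level of height `j` in column `C n`. -/
def lvl (S : RankOne) (n j : ℕ) : Set ℝ := Set.Ioo (S.pos n j) (S.pos n j + S.w n)

/-- The measure on the space: Lebesgue measure restricted to `X`. -/
noncomputable def μ (S : RankOne) : Measure ℝ := volume.restrict S.X

/-- The intrinsic weight sequence `u n F = μ(F ∩ TⁿF) / μ(F)²`. -/
noncomputable def u (S : RankOne) (F : Set ℝ) (n : ℕ) : ℝ :=
  (S.μ (F ∩ (⇑S.T)^[n] '' F)).toReal / (S.μ F).toReal ^ 2

/-- `a n F = ∑_{k<n} u k F`. -/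
noncomputable def a (S : RankOne) (F : Set ℝ) (n : ℕ) : ℝ :=
  ∑ k ∈ Finset.range n, S.u F k

/-- `T` is normal if spacers are added above the rightmost subcolumn infinitely often. -/
def Normal (S : RankOne) : Prop := ∀ m, ∃ n, m ≤ n ∧ 0 < S.s n (S.r n - 1)

/-- `T` grows exponentially: `2 s_{n, r_n - 1} ≥ h_{n+1}` for every `n`. -/
def ExpGrowing (S : RankOne) : Prop := ∀ n, S.h (n + 1) ≤ 2 * S.s n (S.r n - 1)

/-- `T` has a bounded number of cuts: `sup r_n < ∞`. -/
def BoundedCuts (S : RankOne) : Prop := ∃ c, ∀ n, S.r n ≤ c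

/-- `H n = {0} ∪ {∑_{k≤i} (h n + s n k) : 0 ≤ i < r n - 1}`. -/
def Hset (S : RankOne) (n : ℕ) : Finset ℕ :=
  insert 0 ((Finset.range (S.r n - 1)).image fun i => ∑ k ∈ Finset.range (i + 1), (S.h n + S.s n k))

/-- The set of heights in column `C N` of the descendants of the level of height `p`
in column `C j`: `D(J, N) = p + H j ⊕ H (j+1) ⊕ ⋯ ⊕ H (N-1)`. -/
def desc (S : RankOne) (j p : ℕ) : ℕ → Finset ℕ
  | 0 => {p}
  | N + 1 => if N < j then {p} else desc S j p N + S.Hset N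

/-- `M m`: the maximal height of a descendant of the unit interval `I` in column `C m`. -/
def M (S : RankOne) (m : ℕ) : ℕ := (S.desc 0 0 m).sup id

/-- The ergodic sum `S_n(1_F)(x) = ∑_{k<n} 1_F(T^k x)`. -/
noncomputable def birkhoff (S : RankOne) (F : Set ℝ) (n : ℕ) (x : ℝ) : ℝ :=
  ∑ k ∈ Finset.range n, Set.indicator F (fun _ => (1 : ℝ)) ((⇑S.T)^[k] x)

/-- `T` is rationally weakly mixing on `F`. -/
def RWMOn (S : RankOne) (F : Set ℝ) : Prop :=
  MeasurableSet F ∧ 0 < S.μ F ∧ S.μ F ≠ ⊤ ∧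
  ∀ A B : Set ℝ, MeasurableSet A → A ⊆ F → MeasurableSet B → B ⊆ F →
    Tendsto (fun n => (S.a F n)⁻¹ *
      ∑ k ∈ Finset.range n,
        |(S.μ (A ∩ (⇑S.T)^[k] '' B)).toReal - (S.μ A).toReal * (S.μ B).toReal * S.u F k|)
      atTop (nhds 0)

/-- `T` is rationally weakly mixing. -/
def RWM (S : RankOne) : Prop := ∃ F, S.RWMOn F

/-- `T` is rationally ergodic: some set `F` of positive finite measure satisfies a
Renyi inequality. -/
def RatErgodic (S : RankOne) : Prop :=
  ∃ (F : Set ℝ) (c : ℝ), MeasurableSet F ∧ 0 < S.μ F ∧ S.μ F ≠ ⊤ ∧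
    ∀ n, ∫ x in F, (S.birkhoff F n x) ^ 2 ∂S.μ ≤ c * (∫ x in F, S.birkhoff F n x ∂S.μ) ^ 2

/-- `T` is spectrally weakly mixing: every bounded measurable eigenfunction is a.e. constant. -/
def SpecWM (S : RankOne) : Prop :=
  ∀ (f : ℝ → ℂ) (z : ℂ), Measurable f → (∃ C, ∀ᵐ x ∂S.μ, ‖f x‖ ≤ C) →
    (∀ᵐ x ∂S.μ, f (S.T x) = z * f x) → ∃ c : ℂ, ∀ᵐ x ∂S.μ, f x = c

/-- `T` is zero-type: `μ(A ∩ TⁿA) → 0` for all `A` of finite measure. -/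
def ZeroType (S : RankOne) : Prop :=
  ∀ A : Set ℝ, MeasurableSet A → S.μ A ≠ ⊤ →
    Tendsto (fun n => S.μ (A ∩ (⇑S.T)^[n] '' A)) atTop (nhds 0)

/-- The `i`-th nonzero element of `H n` (for `i < r n - 1`): `e n i = ∑_{k ≤ i} (h n + s n k)`. -/
def e (S : RankOne) (n i : ℕ) : ℕ := ∑ k ∈ Finset.range (i + 1), (S.h n + S.s n k)

/-- `T` is steep: listing the nonzero elements of `H 0`, then `H 1`, etc., as `t 1, t 2, …`,
each successive element is at least `4` times the previous one. -/
def Steep (S : RankOne) : Prop :=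
  (∀ n i, i + 2 < S.r n → 4 * S.e n i ≤ S.e n (i + 1)) ∧
  (∀ n, 4 * S.e n (S.r n - 2) ≤ S.e (n + 1) 0)

/-- `T` is almost steep. -/
def AlmostSteep (S : RankOne) : Prop :=
  ∀ n, 3 ≤ S.r n ∧ S.s n 0 = 0 ∧ S.s n 1 = 1 ∧
    ∀ i, 2 ≤ i → i ≤ S.r n - 1 →
      4 * (∑ k ∈ Finset.range i, (S.h n + S.s n k)) ≤ ∑ k ∈ Finset.range (i + 1), (S.h n + S.s n k)

/-- `A` is a finite union of levels of `T`. -/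
def FinUnionLevels (S : RankOne) (A : Set ℝ) : Prop :=
  ∃ q : Finset (ℕ × ℕ), (∀ v ∈ q, v.2 < S.h v.1) ∧ A = ⋃ v ∈ q, S.lvl v.1 v.2

end RankOne

/-!
Fix a level `J` and let `D N` be the set of heights of its descendants in column `C N`; up to a
null set, `J` is the disjoint union of these `#(D N)` levels of width `w N`. If every descendant
has at least `n` levels above it in `C N`, counting itself, then an orbit segment of length `n`
climbs `C N` without leaving it from its first visit to `J` on, so it visits `J` at distinct
heights in `D N` and `S_n(1_J) ≤ #(D N)`. On the other hand each pair `d ≤ d'` in `D m` contributes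
`w m` to `μ(J ∩ T^(d' - d) J)`, so counting pairs gives `#(D m) ≤ 2 μ(J) a_n(J)` as soon as `n`
exceeds all the differences. Exponential growth puts the descendants into the lower half of their
column, so both bounds are available when `h m < 2 * n ≤ h (m + 1)`, and `#(D (m + 1))` is only
`r m` times `#(D m)`.
-/

open scoped Finset

lemma card_sq_le_two_mul_card_filter_le {α : Type*} [LinearOrder α] (D : Finset α) :
    #D ^ 2 ≤ 2 * #{q ∈ D ×ˢ D | q.1 ≤ q.2} := by
  have swap_card : #{q ∈ D ×ˢ D | ¬q.1 ≤ q.2} ≤ #{q ∈ D ×ˢ D | q.1 ≤ q.2} := by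
    refine Finset.card_le_card_of_injOn Prod.swap (fun q hq ↦ ?_) Prod.swap_injective.injOn
    simp only [Finset.coe_filter, Finset.mem_product, mem_ofPred_eq, not_le] at hq
    simpa using ⟨hq.1.symm, hq.2.le⟩
  have split := Finset.card_filter_add_card_filter_not (s := D ×ˢ D) fun q ↦ q.1 ≤ q.2
  rw [Finset.card_product, ← sq] at split
  lia

lemma card_filter_le_le_sum_card_translates {D : Finset ℕ} {n : ℕ}
    (hn : ∀ d ∈ D, ∀ d' ∈ D, d' - d < n) :
    #{q ∈ D ×ˢ D | q.1 ≤ q.2} ≤ ∑ k ∈ Finset.range n, #{d' ∈ D | ∃ d ∈ D, d + k = d'} := by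
  have maps_range : ∀ q ∈ {q ∈ D ×ˢ D | q.1 ≤ q.2}, q.2 - q.1 ∈ Finset.range n := by
    intro q hq
    simp only [Finset.mem_filter, Finset.mem_product] at hq
    exact Finset.mem_range.2 (hn _ hq.1.1 _ hq.1.2)
  rw [Finset.card_eq_sum_card_fiberwise maps_range]
  refine Finset.sum_le_sum fun k _ ↦ Finset.card_le_card_of_injOn Prod.snd ?_ ?_
  · rintro ⟨d, d'⟩ hq
    simp only [Finset.coe_filter, Finset.mem_filter, Finset.mem_product, mem_ofPred_eq] at hq ⊢
    exact ⟨hq.1.1.2, d, hq.1.1.1, by lia⟩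
  · rintro ⟨d₁, d₁'⟩ h₁ ⟨d₂, d₂'⟩ h₂ heq
    simp only [Finset.coe_filter, Finset.mem_filter, mem_ofPred_eq] at h₁ h₂ heq
    simp only [Prod.mk.injEq]
    lia

namespace RankOne

variable (S : RankOne) {j p N d k n : ℕ}

/-! ### Columns and subcolumns -/

/-- The height in column `C (n + 1)` of the bottom level of the `k`-th subcolumn of `C n`. These
heights, for `k < r n`, form the set `Hset n`; the value at `k = r n` is `h (n + 1)`. -/
def subcolumnBase (n k : ℕ) : ℕ := ∑ i ∈ Finset.range k, (S.h n + S.s n i)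

lemma subcolumnBase_succ (n k : ℕ) :
    S.subcolumnBase n (k + 1) = S.subcolumnBase n k + (S.h n + S.s n k) :=
  Finset.sum_range_succ _ _

lemma height_succ (n : ℕ) : S.h (n + 1) = S.subcolumnBase n (S.r n) := S.hrec n

lemma mul_height_le_subcolumnBase (n k : ℕ) : k * S.h n ≤ S.subcolumnBase n k := by
  induction k with
  | zero => simp
  | succ k ih => rw [subcolumnBase_succ, Nat.succ_mul]; lia

lemma height_pos (n : ℕ) : 0 < S.h n := by
  induction n with
  | zero => simp [S.h0]
  | succ n ih =>
    have r_pos : 0 < S.r n := two_pos.trans_le (S.hr n)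
    rw [height_succ]
    exact (Nat.mul_pos r_pos ih).trans_le (S.mul_height_le_subcolumnBase n _)

lemma height_strictMono : StrictMono S.h := strictMono_nat_of_lt_succ fun n ↦ by
  have := Nat.mul_le_mul_right (S.h n) (S.hr n)
  have := S.mul_height_le_subcolumnBase n (S.r n)
  have := S.height_pos n
  rw [height_succ]
  lia

lemma subcolumnBase_strictMono (n : ℕ) : StrictMono (S.subcolumnBase n) :=
  strictMono_nat_of_lt_succ fun k ↦ by
    have := S.height_pos n
    rw [subcolumnBase_succ]
    lia

lemma subcolumnBase_add_lt_height (hd : d < S.h n) (hk : k < S.r n) :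
    S.subcolumnBase n k + d < S.h (n + 1) := by
  have := (S.subcolumnBase_strictMono n).monotone (Nat.succ_le_of_lt hk)
  rw [Nat.succ_eq_add_one, subcolumnBase_succ] at this
  rw [height_succ]
  lia

lemma two_mul_subcolumnBase_add_lt_height (hexp : S.ExpGrowing) (hd : d < S.h n)
    (hk : k < S.r n) : 2 * (S.subcolumnBase n k + d) < S.h (n + 1) := by
  obtain ⟨q, hq⟩ : ∃ q, S.r n = q + 1 := ⟨S.r n - 1, by lia⟩
  have base_le := (S.subcolumnBase_strictMono n).monotone (show k ≤ q by lia)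
  have last_spacers := hexp n
  have height_eq := S.height_succ n
  rw [hq, Nat.add_sub_cancel] at last_spacers
  rw [hq, subcolumnBase_succ] at height_eq
  lia

lemma exists_column_two_mul_le_height (j n : ℕ) :
    ∃ m, j ≤ m ∧ 2 * n ≤ S.h (m + 1) ∧ (j < m → S.h m < 2 * n) := by
  have large_column : ∃ m, j ≤ m ∧ 2 * n ≤ S.h (m + 1) := by
    refine ⟨max j (2 * n), le_max_left _ _, ?_⟩
    have := S.height_strictMono.le_apply (x := max j (2 * n) + 1)
    lia
  obtain ⟨m, ⟨hjm, hm⟩, m_min⟩ := Nat.findX large_column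
  refine ⟨m, hjm, hm, fun hlt ↦ ?_⟩
  obtain ⟨m, rfl⟩ : ∃ m', m = m' + 1 := ⟨m - 1, by lia⟩
  have := m_min m (Nat.lt_succ_self m)
  lia

/-! ### Levels -/

lemma cuts_pos (n : ℕ) : (0 : ℝ) < S.r n := Nat.cast_pos.2 (two_pos.trans_le (S.hr n))

lemma width_pos (n : ℕ) : 0 < S.w n := by
  induction n with
  | zero => simp [S.w0]
  | succ n ih => rw [S.wrec]; exact div_pos ih (S.cuts_pos n)

lemma width_eq_cuts_mul (n : ℕ) : S.w n = S.r n * S.w (n + 1) := by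
  rw [S.wrec, mul_div_cancel₀ _ (S.cuts_pos n).ne']

lemma measurableSet_lvl (n j : ℕ) : MeasurableSet (S.lvl n j) := measurableSet_Ioo

lemma volume_lvl (n j : ℕ) : volume (S.lvl n j) = ENNReal.ofReal (S.w n) := by
  simp [lvl]

lemma lvl_subset_X (hp : p < S.h j) : S.lvl j p ⊆ S.X := by
  rw [S.hX]
  exact subset_iUnion_of_subset j (subset_iUnion₂_of_subset p hp subset_rfl)

lemma measureReal_eq_volume_real {A : Set ℝ} (hA : A ⊆ S.X) : S.μ.real A = volume.real A := by
  simp only [Measure.real, μ, Measure.restrict_eq_self _ hA]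

lemma measureReal_lvl (hp : p < S.h j) : S.μ.real (S.lvl j p) = S.w j := by
  rw [S.measureReal_eq_volume_real (S.lvl_subset_X hp), Measure.real, volume_lvl,
    ENNReal.toReal_ofReal (S.width_pos j).le]

lemma pairwiseDisjoint_lvl (N : ℕ) : (Iio (S.h N)).PairwiseDisjoint (S.lvl N) :=
  fun d hd d' hd' hne ↦ S.disj N d hd d' hd' hne

lemma volume_biUnion_lvl {D : Finset ℕ} (hD : ∀ d ∈ D, d < S.h N) :
    volume (⋃ d ∈ D, S.lvl N d) = #D * ENNReal.ofReal (S.w N) := by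
  rw [measure_biUnion_finset ((S.pairwiseDisjoint_lvl N).subset hD)
    fun d _ ↦ S.measurableSet_lvl N d]
  simp [volume_lvl]

lemma volume_real_biUnion_lvl {D : Finset ℕ} (hD : ∀ d ∈ D, d < S.h N) :
    volume.real (⋃ d ∈ D, S.lvl N d) = #D * S.w N := by
  simp [Measure.real, S.volume_biUnion_lvl hD, (S.width_pos N).le]

lemma image_lvl (hd : d + 1 < S.h N) : S.T '' S.lvl N d = S.lvl N (d + 1) := by
  have translation : S.T '' S.lvl N d =
      (fun x ↦ x + (S.pos N (d + 1) - S.pos N d)) '' S.lvl N d :=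
    image_congr (S.Tmap N d hd)
  rw [translation, lvl, image_add_const_Ioo, lvl]
  ring_nf

lemma image_iterate_lvl (hd : d + k < S.h N) : S.T^[k] '' S.lvl N d = S.lvl N (d + k) := by
  induction k with
  | zero => simp
  | succ k ih =>
    rw [Function.iterate_succ', image_comp, ih (by lia), S.image_lvl (by lia), add_assoc]

lemma lvl_subcolumnBase_add (hd : d < S.h N) (hk : k < S.r N) :
    S.lvl (N + 1) (S.subcolumnBase N k + d) =
      Ioo (S.pos N d + k * S.w (N + 1)) (S.pos N d + k * S.w (N + 1) + S.w (N + 1)) := by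
  rw [lvl, subcolumnBase, S.stack N d hd k hk]

lemma lvl_subcolumnBase_add_subset (hd : d < S.h N) (hk : k < S.r N) :
    S.lvl (N + 1) (S.subcolumnBase N k + d) ⊆ S.lvl N d := by
  rw [S.lvl_subcolumnBase_add hd hk, lvl]
  have w_pos := S.width_pos (N + 1)
  have right_le : ((k : ℝ) + 1) * S.w (N + 1) ≤ S.w N := by
    rw [S.width_eq_cuts_mul N]
    gcongr
    exact_mod_cast hk
  refine Ioo_subset_Ioo ?_ (by linarith)
  exact le_add_of_nonneg_right (by positivity)

/-! ### Descendants -/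

lemma Hset_eq_image_subcolumnBase (n : ℕ) :
    S.Hset n = (Finset.range (S.r n)).image (S.subcolumnBase n) := by
  obtain ⟨q, hq⟩ : ∃ q, S.r n = q + 1 := ⟨S.r n - 1, by have := S.hr n; lia⟩
  rw [Hset, hq, Nat.add_sub_cancel, Finset.range_add_one', Finset.image_insert,
    Finset.map_eq_image, Finset.image_image]
  rfl

lemma mem_Hset {x : ℕ} : x ∈ S.Hset n ↔ ∃ k < S.r n, S.subcolumnBase n k = x := by
  simp [Hset_eq_image_subcolumnBase]

lemma desc_self (j p : ℕ) : S.desc j p j = {p} := by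
  cases j <;> simp [desc]

lemma desc_succ (hN : j ≤ N) : S.desc j p (N + 1) = S.desc j p N + S.Hset N := by
  rw [desc, if_neg hN.not_gt]

lemma mem_desc_succ (hN : j ≤ N) :
    d ∈ S.desc j p (N + 1) ↔
      ∃ d' ∈ S.desc j p N, ∃ k < S.r N, S.subcolumnBase N k + d' = d := by
  simp only [S.desc_succ hN, Finset.mem_add, mem_Hset]
  grind

lemma lt_height_of_mem_desc (hp : p < S.h j) (hN : j ≤ N) :
    ∀ d ∈ S.desc j p N, d < S.h N := by
  induction N, hN using Nat.le_induction with
  | base => simpa [desc_self] using hp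
  | succ N hN ih =>
    intro d hd
    obtain ⟨d', hd', k, hk, rfl⟩ := (S.mem_desc_succ hN).1 hd
    exact S.subcolumnBase_add_lt_height (ih d' hd') hk

lemma two_mul_lt_height_of_mem_desc (hexp : S.ExpGrowing) (hp : p < S.h j) (hN : j < N)
    (hd : d ∈ S.desc j p N) : 2 * d < S.h N := by
  obtain ⟨N, rfl⟩ : ∃ N', N = N' + 1 := ⟨N - 1, by lia⟩
  have hN : j ≤ N := by lia
  obtain ⟨d', hd', k, hk, rfl⟩ := (S.mem_desc_succ hN).1 hd
  exact S.two_mul_subcolumnBase_add_lt_height hexp (S.lt_height_of_mem_desc hp hN d' hd') hk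

lemma desc_sub_desc_lt (hexp : S.ExpGrowing) (hp : p < S.h j) (hN : j ≤ N) (hn : 1 ≤ n)
    (hlt : j < N → S.h N < 2 * n) : ∀ d ∈ S.desc j p N, ∀ d' ∈ S.desc j p N, d' - d < n := by
  intro d hd d' hd'
  rcases hN.eq_or_lt with rfl | hjN
  · rw [desc_self, Finset.mem_singleton] at hd hd'
    lia
  · have := S.two_mul_lt_height_of_mem_desc hexp hp hjN hd'
    have := hlt hjN
    lia

lemma lvl_subset_of_mem_desc (hp : p < S.h j) (hN : j ≤ N) :
    ∀ d ∈ S.desc j p N, S.lvl N d ⊆ S.lvl j p := by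
  induction N, hN using Nat.le_induction with
  | base => simp [desc_self]
  | succ N hN ih =>
    intro d hd
    obtain ⟨d', hd', k, hk, rfl⟩ := (S.mem_desc_succ hN).1 hd
    exact (S.lvl_subcolumnBase_add_subset (S.lt_height_of_mem_desc hp hN d' hd') hk).trans
      (ih d' hd')

lemma biUnion_lvl_subcolumnBase_add_ae_eq (hd : d < S.h N) :
    ⋃ k ∈ Finset.range (S.r N), S.lvl (N + 1) (S.subcolumnBase N k + d) =ᵐ[volume]
      S.lvl N d := by
  -- The `r N` pieces are disjoint and their widths add up to that of the level.
  have base_injective : Function.Injective fun k ↦ S.subcolumnBase N k + d :=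
    (add_left_injective d).comp (S.subcolumnBase_strictMono N).injective
  have reindex : ⋃ k ∈ Finset.range (S.r N), S.lvl (N + 1) (S.subcolumnBase N k + d) =
      ⋃ i ∈ (Finset.range (S.r N)).image fun k ↦ S.subcolumnBase N k + d, S.lvl (N + 1) i :=
    (Finset.set_biUnion_finset_image ..).symm
  have volume_pieces :
      volume (⋃ k ∈ Finset.range (S.r N), S.lvl (N + 1) (S.subcolumnBase N k + d)) =
        volume (S.lvl N d) := by
    rw [reindex, volume_biUnion_lvl, Finset.card_image_of_injective _ base_injective,
      Finset.card_range, volume_lvl, S.width_eq_cuts_mul N, ENNReal.ofReal_mul (Nat.cast_nonneg _),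
      ENNReal.ofReal_natCast]
    simpa using fun k hk ↦ S.subcolumnBase_add_lt_height hd hk
  refine ae_eq_of_subset_of_measure_ge ?_ volume_pieces.ge ?_ (by simp [volume_lvl])
  · exact iUnion₂_subset fun k hk ↦ S.lvl_subcolumnBase_add_subset hd (Finset.mem_range.1 hk)
  · exact (Finset.measurableSet_biUnion _ fun k _ ↦ S.measurableSet_lvl _ _).nullMeasurableSet

lemma biUnion_lvl_desc_ae_eq (hp : p < S.h j) (hN : j ≤ N) :
    ⋃ d ∈ S.desc j p N, S.lvl N d =ᵐ[volume] S.lvl j p := by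
  induction N, hN using Nat.le_induction with
  | base =>
    rw [desc_self, Finset.set_biUnion_singleton]
    exact EventuallyEq.rfl
  | succ N hN ih =>
    have reindex : ⋃ d ∈ S.desc j p (N + 1), S.lvl (N + 1) d =
        ⋃ d ∈ S.desc j p N, ⋃ k ∈ Finset.range (S.r N),
          S.lvl (N + 1) (S.subcolumnBase N k + d) := by
      ext x
      simp only [mem_iUnion, S.mem_desc_succ hN, Finset.mem_range, exists_prop]
      grind
    rw [reindex]
    refine EventuallyEq.trans ?_ ih
    exact Filter.EventuallyEq.countable_bUnion (Finset.countable_toSet _) fun d hd ↦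
      S.biUnion_lvl_subcolumnBase_add_ae_eq (S.lt_height_of_mem_desc hp hN d hd)

lemma card_desc_mul_width (hp : p < S.h j) (hN : j ≤ N) : #(S.desc j p N) * S.w N = S.w j := by
  rw [← S.volume_real_biUnion_lvl (S.lt_height_of_mem_desc hp hN),
    measureReal_congr (S.biUnion_lvl_desc_ae_eq hp hN),
    ← S.measureReal_eq_volume_real (S.lvl_subset_X hp), S.measureReal_lvl hp]

lemma card_desc_succ (hp : p < S.h j) (hN : j ≤ N) :
    (#(S.desc j p (N + 1)) : ℝ) = S.r N * #(S.desc j p N) := by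
  refine mul_right_cancel₀ (S.width_pos (N + 1)).ne' ?_
  calc #(S.desc j p (N + 1)) * S.w (N + 1)
      = #(S.desc j p N) * S.w N := by
        rw [S.card_desc_mul_width hp hN, S.card_desc_mul_width hp (hN.trans N.le_succ)]
    _ = S.r N * #(S.desc j p N) * S.w (N + 1) := by rw [S.width_eq_cuts_mul N]; ring

lemma disjoint_lvl_of_notMem_desc (hp : p < S.h j) (hN : j ≤ N) (hd : d < S.h N)
    (hd_notMem : d ∉ S.desc j p N) : Disjoint (S.lvl N d) (S.lvl j p) := by
  have inter_subset :
      S.lvl N d ∩ S.lvl j p ⊆ S.lvl j p \ ⋃ d' ∈ S.desc j p N, S.lvl N d' := by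
    rintro x ⟨hxd, hxp⟩
    refine ⟨hxp, fun hx ↦ ?_⟩
    obtain ⟨d', hd', hxd'⟩ := mem_iUnion₂.1 hx
    have hne : d ≠ d' := by rintro rfl; exact hd_notMem hd'
    exact disjoint_left.1 (S.disj N d hd d' (S.lt_height_of_mem_desc hp hN d' hd') hne) hxd hxd'
  have inter_null : volume (S.lvl N d ∩ S.lvl j p) = 0 :=
    measure_mono_null inter_subset (ae_le_set.1 (S.biUnion_lvl_desc_ae_eq hp hN).symm.le)
  have inter_open : IsOpen (S.lvl N d ∩ S.lvl j p) := isOpen_Ioo.inter isOpen_Ioo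
  exact disjoint_iff_inter_eq_empty.2 ((inter_open.measure_eq_zero_iff volume).1 inter_null)

/-! ### Upper bound for the ergodic sums -/

lemma birkhoff_eq_card (F : Set ℝ) [DecidablePred (· ∈ F)] (n : ℕ) (x : ℝ) :
    S.birkhoff F n x = #{k ∈ Finset.range n | S.T^[k] x ∈ F} := by
  simp [birkhoff, indicator_apply]

lemma add_mem_desc_of_iterate_mem (hp : p < S.h j) (hN : j ≤ N) (hdk : d + k < S.h N)
    {y : ℝ} (hy : y ∈ S.lvl N d) (hky : S.T^[k] y ∈ S.lvl j p) : d + k ∈ S.desc j p N := by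
  by_contra h_notMem
  have hky' : S.T^[k] y ∈ S.lvl N (d + k) :=
    S.image_iterate_lvl hdk ▸ mem_image_of_mem _ hy
  exact disjoint_left.1 (S.disjoint_lvl_of_notMem_desc hp hN hdk h_notMem) hky' hky

lemma birkhoff_lvl_le_card_desc (hp : p < S.h j) (hN : j ≤ N)
    (hn : ∀ d ∈ S.desc j p N, d + n ≤ S.h N) {x : ℝ}
    (hx : ∀ k, S.T^[k] x ∈ S.lvl j p → ∃ d ∈ S.desc j p N, S.T^[k] x ∈ S.lvl N d) :
    S.birkhoff (S.lvl j p) n x ≤ #(S.desc j p N) := by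
  classical
  rw [birkhoff_eq_card, Nat.cast_le]
  set visits := {k ∈ Finset.range n | S.T^[k] x ∈ S.lvl j p} with visits_def
  rcases visits.eq_empty_or_nonempty with h_empty | h_nonempty
  · simp [h_empty]
  obtain ⟨first, first_mem, first_le⟩ := visits.exists_min_image id h_nonempty
  simp only [id_eq] at first_le
  simp only [visits_def, Finset.mem_filter, Finset.mem_range] at first_mem
  obtain ⟨d, hd, hxd⟩ := hx first first_mem.2
  refine Finset.card_le_card_of_injOn (fun k ↦ d + (k - first)) (fun k hk ↦ ?_)
    fun k hk k' hk' heq ↦ ?_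
  · have hfirst := first_le k hk
    simp only [visits_def, Finset.coe_filter, Finset.mem_range, mem_ofPred_eq] at hk
    refine S.add_mem_desc_of_iterate_mem hp hN (by have := hn d hd; lia) hxd ?_
    rw [← Function.iterate_add_apply, Nat.sub_add_cancel hfirst]
    exact hk.2
  · have := first_le k hk
    have := first_le k' hk'
    simp only at heq
    lia

lemma ae_forall_iterate_mem_lvl_desc (hp : p < S.h j) (hN : j ≤ N) :
    ∀ᵐ x ∂S.μ, ∀ k, S.T^[k] x ∈ S.lvl j p →
      ∃ d ∈ S.desc j p N, S.T^[k] x ∈ S.lvl N d := by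
  have ae_mem : ∀ᵐ x ∂S.μ, x ∈ S.lvl j p → ∃ d ∈ S.desc j p N, x ∈ S.lvl N d := by
    refine ae_mono Measure.restrict_le_self ?_
    filter_upwards [(S.biUnion_lvl_desc_ae_eq hp hN).mem_iff] with x hx hxp
    simpa using hx.2 hxp
  exact ae_all_iff.2 fun k ↦ (S.Tpres.iterate k).quasiMeasurePreserving.ae ae_mem

/-! ### Lower bound for the intrinsic weights -/

lemma card_translates_mul_width_le_measureReal (hp : p < S.h j) (hN : j ≤ N) (k : ℕ) :
    #{d' ∈ S.desc j p N | ∃ d ∈ S.desc j p N, d + k = d'} * S.w N ≤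
      S.μ.real (S.lvl j p ∩ S.T^[k] '' S.lvl j p) := by
  rw [S.measureReal_eq_volume_real (inter_subset_left.trans (S.lvl_subset_X hp)),
    ← S.volume_real_biUnion_lvl fun d hd ↦
      S.lt_height_of_mem_desc hp hN d (Finset.mem_filter.1 hd).1]
  have inter_finite : volume (S.lvl j p ∩ S.T^[k] '' S.lvl j p) ≠ ⊤ :=
    measure_ne_top_of_subset inter_subset_left (by simp [volume_lvl])
  refine measureReal_mono (iUnion₂_subset fun d' hd' ↦ ?_) inter_finite
  obtain ⟨hd', d, hd, rfl⟩ := Finset.mem_filter.1 hd'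
  refine subset_inter (S.lvl_subset_of_mem_desc hp hN _ hd') ?_
  rw [← S.image_iterate_lvl (S.lt_height_of_mem_desc hp hN _ hd')]
  exact image_mono (S.lvl_subset_of_mem_desc hp hN d hd)

lemma width_sq_mul_a_lvl (hp : p < S.h j) (n : ℕ) :
    S.w j ^ 2 * S.a (S.lvl j p) n =
      ∑ k ∈ Finset.range n, S.μ.real (S.lvl j p ∩ S.T^[k] '' S.lvl j p) := by
  rw [a, Finset.mul_sum]
  refine Finset.sum_congr rfl fun k _ ↦ ?_
  have w_sq_ne_zero : S.w j ^ 2 ≠ 0 := pow_ne_zero 2 (S.width_pos j).ne'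
  rw [u, ← Measure.real, ← Measure.real, S.measureReal_lvl hp, mul_div_cancel₀ _ w_sq_ne_zero]

lemma card_desc_le_two_mul_width_mul_a (hp : p < S.h j) (hN : j ≤ N)
    (hn : ∀ d ∈ S.desc j p N, ∀ d' ∈ S.desc j p N, d' - d < n) :
    #(S.desc j p N) ≤ 2 * S.w j * S.a (S.lvl j p) n := by
  have card_sq_le : (#(S.desc j p N) : ℝ) ^ 2 ≤ 2 * ∑ k ∈ Finset.range n,
      (#{d' ∈ S.desc j p N | ∃ d ∈ S.desc j p N, d + k = d'} : ℝ) := by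
    exact_mod_cast (card_sq_le_two_mul_card_filter_le _).trans
      (Nat.mul_le_mul_left 2 (card_filter_le_le_sum_card_translates hn))
  have w_nonneg := (S.width_pos N).le
  refine le_of_mul_le_mul_left ?_ (S.width_pos j)
  calc S.w j * #(S.desc j p N)
      = (#(S.desc j p N) : ℝ) ^ 2 * S.w N := by rw [← S.card_desc_mul_width hp hN]; ring
    _ ≤ 2 * ∑ k ∈ Finset.range n,
          #{d' ∈ S.desc j p N | ∃ d ∈ S.desc j p N, d + k = d'} * S.w N := by
        rw [← Finset.sum_mul, ← mul_assoc]
        gcongr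
    _ ≤ 2 * ∑ k ∈ Finset.range n, S.μ.real (S.lvl j p ∩ S.T^[k] '' S.lvl j p) := by
        gcongr with k
        exact S.card_translates_mul_width_le_measureReal hp hN k
    _ = S.w j * (2 * S.w j * S.a (S.lvl j p) n) := by rw [← S.width_sq_mul_a_lvl hp]; ring

lemma a_lvl_pos (hp : p < S.h j) (hn : 1 ≤ n) : 0 < S.a (S.lvl j p) n := by
  have one_le := S.card_desc_le_two_mul_width_mul_a (n := n) hp le_rfl (by simpa [desc_self])
  have w_pos := S.width_pos j
  rw [desc_self, Finset.card_singleton, Nat.cast_one] at one_le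
  exact pos_of_mul_pos_right (one_pos.trans_le one_le) (by positivity)

end RankOne

theorem statement3_general (S : RankOne) (hexp : S.ExpGrowing) (hbdd : S.BoundedCuts)
    {j p : ℕ} (hp : p < S.h j) :
    ∃ c : ℝ, ∀ n : ℕ, 1 ≤ n →
      ∀ᵐ x ∂S.μ, (S.a (S.lvl j p) n)⁻¹ * S.birkhoff (S.lvl j p) n x ≤ c := by
  obtain ⟨C, hC⟩ := hbdd
  refine ⟨C * (2 * S.w j), fun n hn ↦ ?_⟩
  obtain ⟨m, hjm, hm_succ, hm⟩ := S.exists_column_two_mul_le_height j n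
  have room_above : ∀ d ∈ S.desc j p (m + 1), d + n ≤ S.h (m + 1) := fun d hd ↦ by
    have := S.two_mul_lt_height_of_mem_desc hexp hp (Nat.lt_succ_of_le hjm) hd
    lia
  have hjm_succ : j ≤ m + 1 := hjm.trans m.le_succ
  filter_upwards [S.ae_forall_iterate_mem_lvl_desc hp hjm_succ] with x hx
  rw [inv_mul_le_iff₀ (S.a_lvl_pos hp hn)]
  calc S.birkhoff (S.lvl j p) n x
      ≤ #(S.desc j p (m + 1)) := S.birkhoff_lvl_le_card_desc hp hjm_succ room_above hx
    _ = S.r m * #(S.desc j p m) := S.card_desc_succ hp hjm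
    _ ≤ C * (2 * S.w j * S.a (S.lvl j p) n) := by
        gcongr
        · exact hC m
        · exact S.card_desc_le_two_mul_width_mul_a hp hjm (S.desc_sub_desc_lt hexp hp hjm hn hm)
    _ = S.a (S.lvl j p) n * (C * (2 * S.w j)) := by ring

/-- An exponentially growing rank-one transformation with a bounded number of
cuts is boundedly rationally ergodic on the unit interval `I`: there is a constant `c` such
that for every `n ≥ 1` the essential supremum of `(1/a_n(I)) S_n(1_I)` is at most `c`. -/
theorem statement3 (S : RankOne) (hexp : S.ExpGrowing) (hbdd : S.BoundedCuts) :
    ∃ c : ℝ, ∀ n : ℕ, 1 ≤ n →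
      ∀ᵐ x ∂S.μ, (S.a (S.lvl 0 0) n)⁻¹ * S.birkhoff (S.lvl 0 0) n x ≤ c :=
  statement3_general S hexp hbdd (S.height_pos 0)
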